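/- Let g : ℝ^p → ℝ^p be continuously differentiable and G : ℝ^p → ℝ differentiable with ∇G(v) = (Dg(v))ᵀ v for all v. Let U : ℝ^p → ℝ^p be differentiable and E : ℝ^p → ℝ differentiable with ∇E(v) = (DU(v))ᵀ v for all v. Define g*(x,y) = ∫₀¹ g(x + ξ(y − x)) dξ and G*(x,y) = ½(x + y)ᵀ g*(x,y) + ½(G(x) + G(y)) − ½(xᵀ g(x) + yᵀ g(y)). Let Δx > 0, let a, b, c : ℝ → ℝ^p be differentiable, let λ₊, λ₋ : ℝ → ℝ be nonnegative functions, and let H₊, H₋ : ℝ → Matrix(p,p,ℝ) take symmetric positive definite values. Define the Rusanov-type fluxes f̂₊(t) = g*(b(t), c(t)) − ½ λ₊(t) H₊(t)⁻¹ (c(t) − b(t)) and f̂₋(t) = g*(a(t), b(t)) − ½ λ₋(t) H₋(t)⁻¹ (b(t) − a(t)), and Ĝ₊(t) = G*(b(t), c(t)) − ¼ λ₊(t) (b(t)+c(t))ᵀ H₊(t)⁻¹ (c(t) − b(t)), Ĝ₋(t) = G*(a(t), b(t)) − ¼ λ₋(t) (a(t)+b(t))ᵀ H₋(t)⁻¹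 (b(t) − a(t)). If for all t, (d/dt) U(b(t)) = −(1/Δx)[f̂₊(t) − f̂₋(t)], then for all t, (d/dt) E(b(t)) + (1/Δx)[Ĝ₊(t) − Ĝ₋(t)] ≤ 0. -/

import Mathlib

/-!
The entropy potential `ψ v = v ⬝ᵥ g v - G v` has gradient `g`: differentiating along a direction
`d` gives `d ⬝ᵥ g v + v ⬝ᵥ Dg(v) d - ∇G(v) ⬝ᵥ d`, and compatibility cancels the last two terms.
Integrating along the segment from `x` to `y` yields Tadmor's shuffle condition
`(y - x) ⬝ᵥ g*(x, y) = ψ y - ψ x` (`dotProduct_gstar`).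

By the chain rule and `∇E = (DU)ᵀ v`, one has `(E ∘ b)' = b ⬝ᵥ (U ∘ b)'`, so the scheme turns the
claim into `(Ĝ₊ - b ⬝ᵥ f̂₊) - (Ĝ₋ - b ⬝ᵥ f̂₋) ≤ 0`. By the shuffle condition the two brackets equal
`-ψ b - ¼ λ₊ (c - b) ⬝ᵥ H₊⁻¹ (c - b)` and `-ψ b + ¼ λ₋ (b - a) ⬝ᵥ H₋⁻¹ (b - a)`; the potentials
cancel and what remains is nonpositive because `H₊⁻¹` and `H₋⁻¹` are positive definite.
-/

open Matrix

/-- Jacobian matrix of a map `g : ℝ^p → ℝ^p` at a point. -/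
noncomputable def jac {p : ℕ} (g : (Fin p → ℝ) → (Fin p → ℝ)) (v : Fin p → ℝ) :
    Matrix (Fin p) (Fin p) ℝ :=
  Matrix.of fun i k => fderiv ℝ g v (Pi.single k 1) i

/-- Gradient (as a column vector) of a scalar function on ℝ^p. -/
noncomputable def grad {p : ℕ} (G : (Fin p → ℝ) → ℝ) (v : Fin p → ℝ) : Fin p → ℝ :=
  fun k => fderiv ℝ G v (Pi.single k 1)

/-- Tadmor's second-order entropy-conservative two-point flux. -/
noncomputable def gstar {p : ℕ} (g : (Fin p → ℝ) → (Fin p → ℝ))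
    (x y : Fin p → ℝ) : Fin p → ℝ :=
  ∫ ξ in (0:ℝ)..1, g (x + ξ • (y - x))

/-- The numerical entropy flux associated with the entropy-conservative flux `g*`. -/
noncomputable def Gstar {p : ℕ} (g : (Fin p → ℝ) → (Fin p → ℝ)) (G : (Fin p → ℝ) → ℝ)
    (x y : Fin p → ℝ) : ℝ :=
  (1/2) * ((x + y) ⬝ᵥ gstar g x y) + (1/2) * (G x + G y)
    - (1/2) * (x ⬝ᵥ g x + y ⬝ᵥ g y)

lemma fderiv_eq_jac_mulVec {p : ℕ} (g : (Fin p → ℝ) → (Fin p → ℝ)) (v d : Fin p → ℝ) :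
    fderiv ℝ g v d = jac g v *ᵥ d := by
  have h : jac g v = LinearMap.toMatrix' (fderiv ℝ g v : (Fin p → ℝ) →ₗ[ℝ] (Fin p → ℝ)) := by
    ext i k
    simp [jac, LinearMap.toMatrix'_apply]
  rw [h, LinearMap.toMatrix'_mulVec]
  rfl

lemma fderiv_eq_grad_dotProduct {p : ℕ} (G : (Fin p → ℝ) → ℝ) (v d : Fin p → ℝ) :
    fderiv ℝ G v d = grad G v ⬝ᵥ d := by
  conv_lhs => rw [pi_eq_sum_univ' d]
  rw [map_sum]
  simp only [map_smul, smul_eq_mul, dotProduct, grad]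
  refine Finset.sum_congr rfl fun i _ => ?_
  rw [mul_comm]

/-- Compatibility `∇G = (Dg)ᵀ v` in directional form. -/
lemma fderiv_of_compat {p : ℕ} {g : (Fin p → ℝ) → (Fin p → ℝ)} {G : (Fin p → ℝ) → ℝ}
    {v : Fin p → ℝ} (h : grad G v = (jac g v)ᵀ *ᵥ v) (d : Fin p → ℝ) :
    fderiv ℝ G v d = v ⬝ᵥ fderiv ℝ g v d := by
  rw [fderiv_eq_grad_dotProduct, h, fderiv_eq_jac_mulVec, mulVec_transpose, dotProduct_mulVec]

lemma HasDerivAt.dotProduct_pi {p : ℕ} {u w : ℝ → (Fin p → ℝ)} {u' w' : Fin p → ℝ} {t : ℝ}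
    (hu : HasDerivAt u u' t) (hw : HasDerivAt w w' t) :
    HasDerivAt (fun s => u s ⬝ᵥ w s) (u' ⬝ᵥ w t + u t ⬝ᵥ w') t := by
  have h := HasDerivAt.fun_sum (u := Finset.univ) fun i _ =>
    ((hasDerivAt_pi.1 hu i).fun_mul (hasDerivAt_pi.1 hw i))
  simpa only [dotProduct, Finset.sum_add_distrib] using h

/-- Tadmor's shuffle condition: the jump of the entropy variables paired with `g*` is the jump of
the entropy potential `v ⬝ᵥ g v - G v`. -/
lemma dotProduct_gstar {p : ℕ} {g : (Fin p → ℝ) → (Fin p → ℝ)} {G : (Fin p → ℝ) → ℝ}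
    (hg : ContDiff ℝ 1 g) (hG : Differentiable ℝ G)
    (hcompat : ∀ v, grad G v = (jac g v)ᵀ *ᵥ v) (x y : Fin p → ℝ) :
    (y - x) ⬝ᵥ gstar g x y = (y ⬝ᵥ g y - G y) - (x ⬝ᵥ g x - G x) := by
  have hline : ∀ ξ : ℝ, HasDerivAt (fun s : ℝ => x + s • (y - x)) (y - x) ξ := fun ξ => by
    simpa using ((hasDerivAt_id ξ).smul_const (y - x)).const_add x
  have hgd : Differentiable ℝ g := hg.differentiable one_ne_zero
  have hcont : Continuous fun s : ℝ => g (x + s • (y - x)) :=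
    hg.continuous.comp (by fun_prop)
  have hpot : ∀ ξ : ℝ, HasDerivAt
      (fun s : ℝ => (x + s • (y - x)) ⬝ᵥ g (x + s • (y - x)) - G (x + s • (y - x)))
      ((y - x) ⬝ᵥ g (x + ξ • (y - x))) ξ := fun ξ => by
    have h1 := (hgd (x + ξ • (y - x))).hasFDerivAt.comp_hasDerivAt ξ (hline ξ)
    have h2 := (hG (x + ξ • (y - x))).hasFDerivAt.comp_hasDerivAt ξ (hline ξ)
    have h3 := ((hline ξ).dotProduct_pi h1).fun_sub h2
    rw [fderiv_of_compat (hcompat _), add_sub_cancel_right] at h3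
    exact h3
  have hdot : Continuous fun s : ℝ => (y - x) ⬝ᵥ g (x + s • (y - x)) :=
    continuous_const.dotProduct hcont
  have hftc := intervalIntegral.integral_eq_sub_of_hasDerivAt (fun ξ _ => hpot ξ)
    (hdot.intervalIntegrable 0 1)
  -- Pairing with the fixed vector `y - x` is continuous and linear, so it commutes with the integral.
  let L : (Fin p → ℝ) →L[ℝ] ℝ := LinearMap.toContinuousLinearMap (dotProductBilin ℝ ℝ (y - x))
  have hL : ∀ w, L w = (y - x) ⬝ᵥ w := fun w => rfl
  have hcomm := L.intervalIntegral_comp_comm (hcont.intervalIntegrable (μ := MeasureTheory.volume) 0 1)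
  simp only [hL] at hcomm
  rw [gstar, ← hcomm, hftc]
  simp

/-- Nonnegativity of the Rusanov dissipation `λ d ⬝ᵥ H⁻¹ d`. -/
lemma dissipation_nonneg {p : ℕ} {H : Matrix (Fin p) (Fin p) ℝ} (hH : H.PosDef) {l : ℝ}
    (hl : 0 ≤ l) (d : Fin p → ℝ) : 0 ≤ l * (d ⬝ᵥ (H⁻¹ *ᵥ d)) := by
  have h := hH.inv.posSemidef.dotProduct_mulVec_nonneg d
  rw [star_trivial] at h
  exact mul_nonneg hl h

/-- Entropy stability of the Rusanov-type flux, in which the diffusion matrix is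
`λ H⁻¹` with `λ ≥ 0` a wave-speed bound and `H` a symmetric positive definite
entropy Hessian. -/
theorem rusanov_entropy_stability {p : ℕ}
    (g : (Fin p → ℝ) → (Fin p → ℝ)) (G : (Fin p → ℝ) → ℝ)
    (hg : ContDiff ℝ 1 g) (hG : Differentiable ℝ G)
    (hcompat : ∀ v, grad G v = (jac g v)ᵀ *ᵥ v)
    (U : (Fin p → ℝ) → (Fin p → ℝ)) (E : (Fin p → ℝ) → ℝ)
    (hU : Differentiable ℝ U) (hE : Differentiable ℝ E)
    (hEU : ∀ v, grad E v = (jac U v)ᵀ *ᵥ v)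
    (Δx : ℝ) (hΔx : 0 < Δx)
    (a b c : ℝ → (Fin p → ℝ))
    (ha : Differentiable ℝ a) (hb : Differentiable ℝ b) (hc : Differentiable ℝ c)
    (lp lm : ℝ → ℝ) (hlp : ∀ t, 0 ≤ lp t) (hlm : ∀ t, 0 ≤ lm t)
    (Hp Hm : ℝ → Matrix (Fin p) (Fin p) ℝ)
    (hHp : ∀ t, (Hp t).PosDef) (hHm : ∀ t, (Hm t).PosDef)
    (fhatp fhatm : ℝ → (Fin p → ℝ)) (Ghatp Ghatm : ℝ → ℝ)
    (hfp : ∀ t, fhatp t = gstar g (b t) (c t)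
        - ((1/2) * lp t) • ((Hp t)⁻¹ *ᵥ (c t - b t)))
    (hfm : ∀ t, fhatm t = gstar g (a t) (b t)
        - ((1/2) * lm t) • ((Hm t)⁻¹ *ᵥ (b t - a t)))
    (hGp : ∀ t, Ghatp t = Gstar g G (b t) (c t)
        - (1/4) * lp t * ((b t + c t) ⬝ᵥ ((Hp t)⁻¹ *ᵥ (c t - b t))))
    (hGm : ∀ t, Ghatm t = Gstar g G (a t) (b t)
        - (1/4) * lm t * ((a t + b t) ⬝ᵥ ((Hm t)⁻¹ *ᵥ (b t - a t))))
    (hscheme : ∀ t, deriv (fun s => U (b s)) t = -(1/Δx) • (fhatp t - fhatm t)) :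
    ∀ t, deriv (fun s => E (b s)) t + (1/Δx) * (Ghatp t - Ghatm t) ≤ 0 := by
  intro t
  have hUb := (hU (b t)).hasFDerivAt.comp_hasDerivAt t (hb t).hasDerivAt
  have hEb := (hE (b t)).hasFDerivAt.comp_hasDerivAt t (hb t).hasDerivAt
  have hdE : deriv (fun s => E (b s)) t = b t ⬝ᵥ deriv (fun s => U (b s)) t := by
    have h1 : deriv (fun s => E (b s)) t = _ := hEb.deriv
    have h2 : deriv (fun s => U (b s)) t = _ := hUb.deriv
    rw [h1, h2, fderiv_of_compat (hEU _)]
  have hp := dotProduct_gstar hg hG hcompat (b t) (c t)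
  have hm := dotProduct_gstar hg hG hcompat (a t) (b t)
  have hdp := dissipation_nonneg (hHp t) (hlp t) (c t - b t)
  have hdm := dissipation_nonneg (hHm t) (hlm t) (b t - a t)
  have key : (Ghatp t - b t ⬝ᵥ fhatp t) - (Ghatm t - b t ⬝ᵥ fhatm t) ≤ 0 := by
    rw [hGp, hGm, hfp, hfm]
    -- The vectors `H⁻¹ (c - b)` and `H⁻¹ (b - a)` stay unexpanded while the pairings are distributed.
    generalize (Hp t)⁻¹ *ᵥ (c t - b t) = wp at *
    generalize (Hm t)⁻¹ *ᵥ (b t - a t) = wm at *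
    simp only [Gstar, dotProduct_sub, dotProduct_smul, sub_dotProduct, add_dotProduct,
      smul_eq_mul] at hp hm hdp hdm ⊢
    linarith
  have hrw : deriv (fun s => E (b s)) t + (1/Δx) * (Ghatp t - Ghatm t)
      = (1/Δx) * ((Ghatp t - b t ⬝ᵥ fhatp t) - (Ghatm t - b t ⬝ᵥ fhatm t)) := by
    rw [hdE, hscheme, dotProduct_smul, dotProduct_sub, smul_eq_mul]
    ring
  rw [hrw]
  exact mul_nonpos_of_nonneg_of_nonpos (by positivity) key
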